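/- Let b ≥ 2 be an integer base and let A ⊂ [0,1) be a half-open interval. Let r ≥ 1 be the smallest positive integer for which A can be written as A = [h·b^{1−r} + g·b^{−r} − z, h·b^{1−r} + G·b^{−r} + Z) with an integer h ≥ 0, integers 1 ≤ g ≤ G ≤ b−1, and reals z, Z ∈ [0, b^{−r}). Then the volume vector of A × A satisfies: (i) V_i(A × A) = 0 for all i = 0, …, r−2; (ii) b·V_{i+1}(A × A) ≥ V_i(A × A) for all i ≥ r; and (iii) V_{r−1}(A × A) − (b(b−2)/(b−1))·V_r(A × A) ≤ Ṽ_r(A × A). -/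

import Mathlib

open MeasureTheory

/-- `γ_b(x,y)`: the exact number of initial common base-`b` digits of `x, y ∈ [0,1)`,
i.e. the unique `i ≥ 0` with `⌊b^i x⌋ = ⌊b^i y⌋` but `⌊b^{i+1} x⌋ ≠ ⌊b^{i+1} y⌋`
when `x ≠ y`, and `∞` when `x = y`. -/
noncomputable def gammaB (b : ℕ) (x y : ℝ) : ℕ∞ :=
  if x = y then ⊤
  else ((sInf {i : ℕ | ⌊(b : ℝ) ^ i * x⌋ = ⌊(b : ℝ) ^ i * y⌋ ∧
      ⌊(b : ℝ) ^ (i + 1) * x⌋ ≠ ⌊(b : ℝ) ^ (i + 1) * y⌋} : ℕ) : ℕ∞)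

/-- `V_i(A × B)`: the 2-dimensional Lebesgue measure of
`{(x,y) ∈ A × B : x ≠ y, γ_b(x,y) = i}`. -/
noncomputable def Vvec (b : ℕ) (A B : Set ℝ) (i : ℕ) : ℝ :=
  (volume {p : ℝ × ℝ | p.1 ∈ A ∧ p.2 ∈ B ∧ p.1 ≠ p.2 ∧ gammaB b p.1 p.2 = (i : ℕ∞)}).toReal

/-- `A` admits the representation
`A = [h·b^{1−r} + g·b^{−r} − z, h·b^{1−r} + G·b^{−r} + Z)` with an integer `h ≥ 0`,
integers `1 ≤ g ≤ G ≤ b−1`, and reals `z, Z ∈ [0, b^{−r})`. -/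
def IsRep (b : ℕ) (A : Set ℝ) (r : ℕ) : Prop :=
  ∃ (h g G : ℕ) (z Z : ℝ), 1 ≤ g ∧ g ≤ G ∧ G + 1 ≤ b ∧
    0 ≤ z ∧ z < (b : ℝ) ^ (-(r : ℤ)) ∧ 0 ≤ Z ∧ Z < (b : ℝ) ^ (-(r : ℤ)) ∧
    A = Set.Ico ((h : ℝ) * (b : ℝ) ^ (1 - (r : ℤ)) + (g : ℝ) * (b : ℝ) ^ (-(r : ℤ)) - z)
                ((h : ℝ) * (b : ℝ) ^ (1 - (r : ℤ)) + (G : ℝ) * (b : ℝ) ^ (-(r : ℤ)) + Z)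

/-- The set of pairs in `[p,q)²` whose multiples by `B` have the same integer part. -/
def agreeSet (B p q : ℝ) : Set (ℝ × ℝ) :=
  {P | P.1 ∈ Set.Ico p q ∧ P.2 ∈ Set.Ico p q ∧ ⌊B * P.1⌋ = ⌊B * P.2⌋}

theorem agreeSet_subset (B p q : ℝ) : agreeSet B p q ⊆ Set.Ico p q ×ˢ Set.Ico p q :=
  fun _ hP => ⟨hP.1, hP.2.1⟩

theorem measurableSet_agreeSet (B p q : ℝ) : MeasurableSet (agreeSet B p q) := by
  have h1 : MeasurableSet {P : ℝ × ℝ | ⌊B * P.1⌋ = ⌊B * P.2⌋} :=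
    measurableSet_eq_fun (by fun_prop) (by fun_prop)
  exact (measurable_fst measurableSet_Ico).inter ((measurable_snd measurableSet_Ico).inter h1)

theorem volume_agreeSet_ne_top (B p q : ℝ) : volume (agreeSet B p q) ≠ ⊤ := by
  refine measure_ne_top_of_subset (agreeSet_subset B p q) ?_
  rw [Measure.volume_eq_prod, Measure.prod_prod, Real.volume_Ico]
  exact ENNReal.mul_ne_top ENNReal.ofReal_ne_top ENNReal.ofReal_ne_top

theorem agreeSet_split {B p q m : ℝ} {k : ℤ} (hB : 0 < B) (hm : B * m = k) (hp : p ≤ m)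
    (hq : m ≤ q) :
    volume.real (agreeSet B p q) =
      volume.real (agreeSet B p m) + volume.real (agreeSet B m q) := by
  have hlt : ∀ x, x < m → ⌊B * x⌋ < k := fun x hx => by
    rw [Int.floor_lt, ← hm]; exact mul_lt_mul_of_pos_left hx hB
  have hge : ∀ x, m ≤ x → k ≤ ⌊B * x⌋ := fun x hx => by
    rw [Int.le_floor, ← hm]; exact mul_le_mul_of_nonneg_left hx hB.le
  have hu : agreeSet B p q = agreeSet B p m ∪ agreeSet B m q := by
    ext ⟨x, y⟩
    simp only [agreeSet, Set.mem_union, Set.mem_ofPred_eq, Set.mem_Ico]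
    constructor
    · rintro ⟨⟨h1, h2⟩, ⟨h3, h4⟩, h5⟩
      rcases lt_or_ge x m with hx | hx <;> rcases lt_or_ge y m with hy | hy
      · exact Or.inl ⟨⟨h1, hx⟩, ⟨h3, hy⟩, h5⟩
      · have := hlt x hx; have := hge y hy; omega
      · have := hlt y hy; have := hge x hx; omega
      · exact Or.inr ⟨⟨hx, h2⟩, ⟨hy, h4⟩, h5⟩
    · rintro (⟨⟨h1, h2⟩, ⟨h3, h4⟩, h5⟩ | ⟨⟨h1, h2⟩, ⟨h3, h4⟩, h5⟩)
      · exact ⟨⟨h1, h2.trans_le hq⟩, ⟨h3, h4.trans_le hq⟩, h5⟩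
      · exact ⟨⟨hp.trans h1, h2⟩, ⟨hp.trans h3, h4⟩, h5⟩
  rw [hu]
  refine measureReal_union ?_ (measurableSet_agreeSet _ _ _) (volume_agreeSet_ne_top _ _ _)
    (volume_agreeSet_ne_top _ _ _)
  rw [Set.disjoint_left]
  rintro ⟨x, y⟩ h1 h2
  exact absurd h1.1.2 (not_lt.2 h2.1.1)

theorem floor_mul_eq_of_mem_Ico {B p q : ℝ} {k : ℤ} (hB : 0 < B) (hp : k ≤ B * p)
    (hq : B * q ≤ k + 1) {x : ℝ} (hx : x ∈ Set.Ico p q) : ⌊B * x⌋ = k := by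
  rw [Int.floor_eq_iff]
  exact ⟨hp.trans (mul_le_mul_of_nonneg_left hx.1 hB.le),
    (mul_lt_mul_of_pos_left hx.2 hB).trans_le hq⟩

theorem volume_agreeSet_of_cell {B p q : ℝ} {k : ℤ} (hB : 0 < B) (hp : k ≤ B * p)
    (hq : B * q ≤ k + 1) (hpq : p ≤ q) : volume.real (agreeSet B p q) = (q - p) ^ 2 := by
  have h : agreeSet B p q = Set.Ico p q ×ˢ Set.Ico p q := by
    refine (agreeSet_subset B p q).antisymm fun P hP => ⟨hP.1, hP.2, ?_⟩
    rw [floor_mul_eq_of_mem_Ico hB hp hq hP.1, floor_mul_eq_of_mem_Ico hB hp hq hP.2]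
  rw [h, Measure.volume_eq_prod, measureReal_prod_prod, Real.volume_real_Ico_of_le hpq, sq]

/-- The area of the agreement set of `[0,t)` at integer resolution. -/
noncomputable def cellArea (t : ℝ) : ℝ := ⌊t⌋ + Int.fract t ^ 2

theorem cellArea_add_int (t : ℝ) (n : ℤ) : cellArea (t + n) = cellArea t + n := by
  simp only [cellArea, Int.floor_add_intCast, Int.fract_add_intCast]; push_cast; ring

theorem cellArea_of_mem {t : ℝ} (h0 : 0 ≤ t) (h1 : t < 1) : cellArea t = t ^ 2 := by
  have h : ⌊t⌋ = 0 := Int.floor_eq_zero_iff.2 ⟨h0, h1⟩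
  simp [cellArea, Int.fract, h]

theorem cellArea_le (t : ℝ) : cellArea t ≤ t := by
  have h := Int.floor_add_fract t
  have h0 := Int.fract_nonneg t
  have h1 := Int.fract_lt_one t
  unfold cellArea
  nlinarith

theorem exists_nat_add_of_nonneg {t : ℝ} (ht : 0 ≤ t) :
    ∃ (n : ℕ) (s : ℝ), 0 ≤ s ∧ s < 1 ∧ t = s + n :=
  ⟨⌊t⌋₊, t - ⌊t⌋₊, by linarith [Nat.floor_le ht], by linarith [Nat.lt_floor_add_one t], by ring⟩

theorem cellArea_add_nat (t : ℝ) (n : ℕ) : cellArea (t + n) = cellArea t + n := by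
  simpa using cellArea_add_int t n

theorem volume_agreeSet_right {B : ℝ} (hB : 0 < B) (m : ℤ) {t : ℝ} (ht : 0 ≤ t) :
    volume.real (agreeSet B (m / B) ((m + t) / B)) = cellArea t / B ^ 2 := by
  obtain ⟨n, s, hs0, hs1, rfl⟩ := exists_nat_add_of_nonneg ht
  rw [cellArea_add_nat, cellArea_of_mem hs0 hs1]
  clear ht
  induction n generalizing m with
  | zero =>
    rw [volume_agreeSet_of_cell hB (k := m)]
    · field_simp; push_cast; ring
    · rw [mul_div_cancel₀ _ hB.ne']
    · rw [mul_div_cancel₀ _ hB.ne']; push_cast; linarith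
    · gcongr; push_cast; linarith
  | succ n ih =>
    rw [agreeSet_split hB (m := (m + 1 : ℤ) / B) (k := m + 1)]
    · have e : ((m : ℝ) + (s + (n + 1 : ℕ))) / B = ((m + 1 : ℤ) + (s + n)) / B := by
        push_cast; ring
      rw [e, ih, volume_agreeSet_of_cell hB (k := m)]
      · field_simp; push_cast; ring
      · rw [mul_div_cancel₀ _ hB.ne']
      · rw [mul_div_cancel₀ _ hB.ne']; push_cast; linarith
      · gcongr; linarith
    · rw [mul_div_cancel₀ _ hB.ne']
    · gcongr; linarith
    · gcongr; push_cast
      have : (0 : ℝ) ≤ n := n.cast_nonneg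
      linarith

theorem volume_agreeSet_left {B : ℝ} (hB : 0 < B) (m : ℤ) {t : ℝ} (ht : 0 ≤ t) :
    volume.real (agreeSet B ((m - t) / B) (m / B)) = cellArea t / B ^ 2 := by
  obtain ⟨n, s, hs0, hs1, rfl⟩ := exists_nat_add_of_nonneg ht
  rw [cellArea_add_nat, cellArea_of_mem hs0 hs1]
  clear ht
  induction n generalizing m with
  | zero =>
    rw [volume_agreeSet_of_cell hB (k := m - 1)]
    · field_simp; push_cast; ring
    · rw [mul_div_cancel₀ _ hB.ne']; push_cast; linarith
    · rw [mul_div_cancel₀ _ hB.ne']; push_cast; linarith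
    · gcongr; push_cast; linarith
  | succ n ih =>
    rw [agreeSet_split hB (m := (m - 1 : ℤ) / B) (k := m - 1)]
    · have e : ((m : ℝ) - (s + (n + 1 : ℕ))) / B = ((m - 1 : ℤ) - (s + n)) / B := by
        push_cast; ring
      rw [e, ih, volume_agreeSet_of_cell hB (k := m - 1)]
      · field_simp; push_cast; ring
      · rw [mul_div_cancel₀ _ hB.ne']
      · rw [mul_div_cancel₀ _ hB.ne']; push_cast; linarith
      · gcongr; linarith
    · rw [mul_div_cancel₀ _ hB.ne']
    · gcongr; push_cast
      have : (0 : ℝ) ≤ n := n.cast_nonneg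
      linarith
    · gcongr; linarith

/-- Areas around a grid point `m` inside the interval. -/
theorem volume_agreeSet_of_grid {B m u v : ℝ} {k : ℤ} (hB : 0 < B) (hm : B * m = k)
    (hu : 0 ≤ u) (hv : 0 ≤ v) :
    volume.real (agreeSet B (m - u) (m + v)) =
      (cellArea (B * u) + cellArea (B * v)) / B ^ 2 := by
  rw [agreeSet_split hB hm (by linarith) (by linarith)]
  have h1 := volume_agreeSet_left hB k (mul_nonneg hB.le hu)
  have h2 := volume_agreeSet_right hB k (mul_nonneg hB.le hv)
  rw [← hm, ← mul_sub, mul_div_cancel_left₀ _ hB.ne', mul_div_cancel_left₀ _ hB.ne'] at h1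
  rw [← hm, ← mul_add, mul_div_cancel_left₀ _ hB.ne', mul_div_cancel_left₀ _ hB.ne'] at h2
  rw [h1, h2, add_div]

theorem floor_pow_mul_succ {b : ℕ} (hb : 0 < b) {x y : ℝ} {n : ℕ}
    (h : ⌊(b : ℝ) ^ (n + 1) * x⌋ = ⌊(b : ℝ) ^ (n + 1) * y⌋) :
    ⌊(b : ℝ) ^ n * x⌋ = ⌊(b : ℝ) ^ n * y⌋ := by
  have hb' : (b : ℝ) ≠ 0 := by positivity
  have key : ∀ t : ℝ, ⌊(b : ℝ) ^ n * t⌋ = ⌊(b : ℝ) ^ (n + 1) * t⌋ / (b : ℤ) := fun t => by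
    rw [← Int.floor_div_natCast]
    congr 1
    rw [pow_succ]
    field_simp
  rw [key, key, h]

theorem floor_pow_mul_of_le {b : ℕ} (hb : 0 < b) {x y : ℝ} {m n : ℕ} (hmn : m ≤ n)
    (h : ⌊(b : ℝ) ^ n * x⌋ = ⌊(b : ℝ) ^ n * y⌋) :
    ⌊(b : ℝ) ^ m * x⌋ = ⌊(b : ℝ) ^ m * y⌋ := by
  induction n, hmn using Nat.le_induction with
  | base => exact h
  | succ n _ ih => exact ih (floor_pow_mul_succ hb h)

theorem exists_floor_pow_mul_ne {b : ℕ} (hb : 2 ≤ b) {x y : ℝ} (hxy : x ≠ y) :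
    ∃ n : ℕ, ⌊(b : ℝ) ^ n * x⌋ ≠ ⌊(b : ℝ) ^ n * y⌋ := by
  have hb' : (1 : ℝ) < b := by exact_mod_cast hb
  obtain ⟨n, hn⟩ := pow_unbounded_of_one_lt (1 / |x - y|) hb'
  refine ⟨n, fun h => ?_⟩
  have h1 := Int.abs_sub_lt_one_of_floor_eq_floor h
  have h2 : 0 < |x - y| := abs_pos.2 (sub_ne_zero.2 hxy)
  rw [div_lt_iff₀ h2] at hn
  rw [← mul_sub, abs_mul, abs_of_pos (by positivity)] at h1
  linarith

theorem ne_and_gammaB_eq_iff {b : ℕ} (hb : 2 ≤ b) {x y : ℝ} (hx : x ∈ Set.Ico (0 : ℝ) 1)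
    (hy : y ∈ Set.Ico (0 : ℝ) 1) (i : ℕ) :
    (x ≠ y ∧ gammaB b x y = (i : ℕ∞)) ↔
      (⌊(b : ℝ) ^ i * x⌋ = ⌊(b : ℝ) ^ i * y⌋ ∧
        ⌊(b : ℝ) ^ (i + 1) * x⌋ ≠ ⌊(b : ℝ) ^ (i + 1) * y⌋) := by
  have hb0 : 0 < b := by omega
  constructor
  · rintro ⟨hxy, h⟩
    rw [gammaB, if_neg hxy, Nat.cast_inj] at h
    rw [← h]
    refine Nat.sInf_mem (s := {i : ℕ | ⌊(b : ℝ) ^ i * x⌋ = ⌊(b : ℝ) ^ i * y⌋ ∧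
      ⌊(b : ℝ) ^ (i + 1) * x⌋ ≠ ⌊(b : ℝ) ^ (i + 1) * y⌋}) ?_
    by_contra hemp
    rw [Set.not_nonempty_iff_eq_empty, Set.eq_empty_iff_forall_notMem] at hemp
    obtain ⟨n, hn⟩ := exists_floor_pow_mul_ne hb hxy
    refine hn ?_
    clear hn
    induction n with
    | zero =>
      rw [pow_zero, one_mul, one_mul, Int.floor_eq_zero_iff.2 hx, Int.floor_eq_zero_iff.2 hy]
    | succ n ih => exact not_not.1 fun h => hemp n ⟨ih, h⟩
  · rintro ⟨h1, h2⟩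
    have hxy : x ≠ y := fun h => h2 (by rw [h])
    refine ⟨hxy, ?_⟩
    rw [gammaB, if_neg hxy, Nat.cast_inj]
    have hs : {i : ℕ | ⌊(b : ℝ) ^ i * x⌋ = ⌊(b : ℝ) ^ i * y⌋ ∧
        ⌊(b : ℝ) ^ (i + 1) * x⌋ ≠ ⌊(b : ℝ) ^ (i + 1) * y⌋} = {i} := by
      ext j
      simp only [Set.mem_ofPred_eq, Set.mem_singleton_iff]
      constructor
      · rintro ⟨h3, h4⟩
        rcases lt_trichotomy j i with hji | hji | hji
        · exact absurd (floor_pow_mul_of_le hb0 hji h1) h4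
        · exact hji
        · exact absurd (floor_pow_mul_of_le hb0 hji h3) h2
      · rintro rfl
        exact ⟨h1, h2⟩
    rw [hs, csInf_singleton]

theorem Vvec_Ico_eq_sub {b : ℕ} (hb : 2 ≤ b) {p q : ℝ} (h : Set.Ico p q ⊆ Set.Ico (0 : ℝ) 1)
    (i : ℕ) :
    Vvec b (Set.Ico p q) (Set.Ico p q) i =
      volume.real (agreeSet ((b : ℝ) ^ i) p q) -
        volume.real (agreeSet ((b : ℝ) ^ (i + 1)) p q) := by
  have hs : {P : ℝ × ℝ | P.1 ∈ Set.Ico p q ∧ P.2 ∈ Set.Ico p q ∧ P.1 ≠ P.2 ∧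
      gammaB b P.1 P.2 = (i : ℕ∞)} =
      agreeSet ((b : ℝ) ^ i) p q \ agreeSet ((b : ℝ) ^ (i + 1)) p q := by
    ext P
    constructor
    · rintro ⟨h1, h2, h3⟩
      rw [ne_and_gammaB_eq_iff hb (h h1) (h h2)] at h3
      exact ⟨⟨h1, h2, h3.1⟩, fun h4 => h3.2 h4.2.2⟩
    · rintro ⟨⟨h1, h2, h3⟩, h4⟩
      exact ⟨h1, h2, (ne_and_gammaB_eq_iff hb (h h1) (h h2) i).2
        ⟨h3, fun h5 => h4 ⟨h1, h2, h5⟩⟩⟩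
  rw [Vvec, hs]
  exact measureReal_sdiff (fun P hP => ⟨hP.1, hP.2.1, floor_pow_mul_succ (by omega) hP.2.2⟩)
    (measurableSet_agreeSet _ _ _) (volume_agreeSet_ne_top _ _ _)

/-- The area of the pairs in `[0,t)²` agreeing at resolution `1` but not at resolution `1 / b`. -/
noncomputable def splitArea (b : ℕ) (t : ℝ) : ℝ := cellArea t - cellArea (b * t) / (b : ℝ) ^ 2

theorem splitArea_add_nat {b : ℕ} (hb : 0 < b) (t : ℝ) (n : ℕ) :
    splitArea b (t + n) = splitArea b t + n * (b - 1) / b := by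
  have hb' : (b : ℝ) ≠ 0 := by positivity
  have e : (b : ℝ) * (t + n) = b * t + (b * n : ℕ) := by push_cast; ring
  rw [splitArea, splitArea, e, cellArea_add_nat, cellArea_add_nat]
  field_simp
  push_cast
  ring

theorem exists_digit {b : ℕ} (hb : 0 < b) {t : ℝ} (h0 : 0 ≤ t) (h1 : t < 1) :
    ∃ (j : ℕ) (w : ℝ), j + 1 ≤ b ∧ 0 ≤ w ∧ w < 1 ∧ (b : ℝ) * t = w + j ∧
      splitArea b t * (b : ℝ) ^ 2 = j * (j - 1 + 2 * w) := by
  have hb' : (0 : ℝ) < b := by positivity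
  obtain ⟨j, w, hw0, hw1, e⟩ := exists_nat_add_of_nonneg (mul_nonneg hb'.le h0)
  refine ⟨j, w, ?_, hw0, hw1, e, ?_⟩
  · have : (j : ℝ) < b := by nlinarith
    exact_mod_cast this
  · rw [splitArea, e, cellArea_add_nat, cellArea_of_mem hw0 hw1, cellArea_of_mem h0 h1,
      sub_mul, div_mul_cancel₀ _ (by positivity)]
    have : t ^ 2 * (b : ℝ) ^ 2 = (w + j) ^ 2 := by rw [← e]; ring
    rw [this]
    ring

theorem natCast_mul_sub_one_add_nonneg (j : ℕ) {w : ℝ} (hw : 0 ≤ w) :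
    (0 : ℝ) ≤ j * (j - 1 + 2 * w) := by
  rcases Nat.eq_zero_or_pos j with rfl | hj
  · simp
  · have : (1 : ℝ) ≤ j := by exact_mod_cast hj
    exact mul_nonneg (by linarith) (by linarith)

theorem splitArea_nonneg {b : ℕ} (hb : 0 < b) {t : ℝ} (h0 : 0 ≤ t) (h1 : t < 1) :
    0 ≤ splitArea b t := by
  obtain ⟨j, w, -, hw0, -, -, e⟩ := exists_digit hb h0 h1
  have hb' : (0 : ℝ) < (b : ℝ) ^ 2 := by positivity
  exact nonneg_of_mul_nonneg_left (e ▸ natCast_mul_sub_one_add_nonneg j hw0) hb'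

/-- The tangent bound for `splitArea` coming from its last linear piece. -/
theorem sub_one_mul_le_splitArea {b : ℕ} (hb : 0 < b) {t : ℝ} (h0 : 0 ≤ t) (h1 : t < 1) :
    ((b : ℝ) - 1) * (2 * t - 1) ≤ b * splitArea b t := by
  obtain ⟨l, v, hl, hv0, hv1, e, hs⟩ := exists_digit hb h0 h1
  have hb' : (0 : ℝ) < b := by positivity
  have hlb : (0 : ℝ) ≤ (b - 1 - l) * (b - l - 2 * v) := by
    rcases Nat.eq_or_lt_of_le hl with h | h
    · have : (b : ℝ) - 1 - l = 0 := by rw [← h]; push_cast; ring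
      rw [this, zero_mul]
    · have : (l : ℝ) + 2 ≤ b := by exact_mod_cast h
      exact mul_nonneg (by linarith) (by linarith)
  refine le_of_mul_le_mul_right ?_ hb'
  calc ((b : ℝ) - 1) * (2 * t - 1) * b = (b - 1) * (2 * (b * t) - b) := by ring
    _ = (b - 1) * (2 * (v + l) - b) := by rw [e]
    _ ≤ l * (l - 1 + 2 * v) := by linarith
    _ = b * splitArea b t * b := by rw [← hs]; ring

theorem mul_splitArea_le {b : ℕ} (hb : 0 < b) {t : ℝ} (ht : 0 ≤ t) :
    b * splitArea b t ≤ splitArea b (b * t) := by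
  have hb' : (0 : ℝ) < b := by positivity
  obtain ⟨n, s, hs0, hs1, rfl⟩ := exists_nat_add_of_nonneg ht
  have e : (b : ℝ) * (s + n) = b * s + (b * n : ℕ) := by push_cast; ring
  rw [e, splitArea_add_nat hb, splitArea_add_nat hb]
  suffices h : b * splitArea b s ≤ splitArea b (b * s) by
    have : (b : ℝ) * (n * (b - 1) / b) = ((b * n : ℕ) : ℝ) * (b - 1) / b := by
      push_cast; ring
    rw [mul_add, this]
    linarith
  obtain ⟨j, w, hj, hw0, hw1, ew, es⟩ := exists_digit hb hs0 hs1
  rw [ew, splitArea_add_nat hb]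
  have hnn := splitArea_nonneg hb hw0 hw1
  have htan := sub_one_mul_le_splitArea hb hw0 hw1
  have hj0 : (0 : ℝ) ≤ j := j.cast_nonneg
  have hjb : (j : ℝ) + 1 ≤ b := by exact_mod_cast hj
  have key : (j : ℝ) * (2 * w + j - b) ≤ b * splitArea b w := by
    rcases le_total (2 * w + j - b) 0 with h | h
    · exact (mul_nonpos_of_nonneg_of_nonpos hj0 h).trans (by positivity)
    · refine le_trans ?_ htan
      exact mul_le_mul (by linarith) (by linarith) h (by linarith)
  refine le_of_mul_le_mul_right ?_ hb'
  calc b * splitArea b s * b = j * (j - 1 + 2 * w) := by rw [← es]; ring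
    _ ≤ b * splitArea b w + j * (b - 1) := by linarith
    _ = (splitArea b w + j * (b - 1) / b) * b := by field_simp

theorem sq_add_le_of_splitArea {b : ℕ} (hb : 2 ≤ b) {z Z : ℝ} {n : ℕ} (hz0 : 0 ≤ z) (hz1 : z < 1)
    (hZ0 : 0 ≤ Z) (hZ1 : Z < 1) (hn : n + 2 ≤ b) :
    (z + (Z + n)) ^ 2 - b * (b - 2) / (b - 1) * (splitArea b z + splitArea b (Z + n)) ≤
      2 * (cellArea z + cellArea (Z + n)) := by
  have hb0 : 0 < b := by omega
  have hb2 : (2 : ℝ) ≤ b := by exact_mod_cast hb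
  have hb1 : (0 : ℝ) < b - 1 := by linarith
  have hn0 : (0 : ℝ) ≤ n := n.cast_nonneg
  have hnb : (n : ℝ) + 2 ≤ b := by exact_mod_cast hn
  rw [splitArea_add_nat hb0, cellArea_add_nat, cellArea_of_mem hz0 hz1, cellArea_of_mem hZ0 hZ1]
  have hz := splitArea_nonneg hb0 hz0 hz1
  have hZ := splitArea_nonneg hb0 hZ0 hZ1
  have tz := sub_one_mul_le_splitArea hb0 hz0 hz1
  have tZ := sub_one_mul_le_splitArea hb0 hZ0 hZ1
  have key : (n : ℝ) * (n - b + 2 * (z + Z)) ≤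
      b * (b - 2) / (b - 1) * (splitArea b z + splitArea b Z) := by
    rcases le_total ((n : ℝ) - b + 2 * (z + Z)) 0 with h | h
    · refine (mul_nonpos_of_nonneg_of_nonpos hn0 h).trans ?_
      have : (0 : ℝ) ≤ b - 2 := by linarith
      positivity
    · calc (n : ℝ) * (n - b + 2 * (z + Z)) ≤ (b - 2) * (2 * (z + Z) - 2) :=
            mul_le_mul (by linarith) (by linarith) h (by linarith)
        _ = (b - 2) / (b - 1) * ((b - 1) * (2 * z - 1) + (b - 1) * (2 * Z - 1)) := by
            field_simp; ring
        _ ≤ (b - 2) / (b - 1) * (b * splitArea b z + b * splitArea b Z) := by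
            have : (0 : ℝ) ≤ (b - 2) / (b - 1) := div_nonneg (by linarith) hb1.le
            gcongr
        _ = _ := by ring
  have e : (b : ℝ) * (b - 2) / (b - 1) * (splitArea b z + (splitArea b Z + n * (b - 1) / b)) =
      b * (b - 2) / (b - 1) * (splitArea b z + splitArea b Z) + (b - 2) * n := by
    field_simp
    ring
  rw [e]
  nlinarith [sq_nonneg (z - Z)]

theorem hasSum_sub_succ_of_antitone {M : ℕ → ℝ} (hM : ∀ i, 0 ≤ M i - M (i + 1))
    (h0 : Filter.Tendsto M Filter.atTop (nhds 0)) :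
    HasSum (fun i => M i - M (i + 1)) (M 0) := by
  rw [hasSum_iff_tendsto_nat_of_nonneg hM]
  simp only [Finset.sum_range_sub']
  simpa using h0.const_sub (M 0)

/-- Properties of the volume vector of `A × A` for a half-open interval `A ⊂ [0,1)`,
where `r ≥ 1` is the smallest positive integer admitting the representation above:
(i) `V_i(A×A) = 0` for `i = 0,…,r−2`; (ii) `b·V_{i+1}(A×A) ≥ V_i(A×A)` for all `i ≥ r`;
(iii) `V_{r−1}(A×A) − (b(b−2)/(b−1))·V_r(A×A) ≤ Ṽ_r(A×A) = Σ_{i≥r} V_i(A×A)`. -/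
theorem claim_volume_vector (b : ℕ) (hb : 2 ≤ b) (A : Set ℝ) (a c : ℝ)
    (hA : A = Set.Ico a c) (hac : a < c) (hsub : A ⊆ Set.Ico (0 : ℝ) 1)
    (hne : A ≠ Set.Ico (0 : ℝ) 1)
    (r : ℕ) (hr : 1 ≤ r) (hrep : IsRep b A r)
    (hmin : ∀ r', 1 ≤ r' → IsRep b A r' → r ≤ r') :
    (∀ i : ℕ, i + 2 ≤ r → Vvec b A A i = 0) ∧
    (∀ i : ℕ, r ≤ i → Vvec b A A i ≤ (b : ℝ) * Vvec b A A (i + 1)) ∧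
    (Vvec b A A (r - 1) - ((b : ℝ) * ((b : ℝ) - 2) / ((b : ℝ) - 1)) * Vvec b A A r ≤
      ∑' i : ℕ, Vvec b A A (r + i)) := by
  subst hA
  have hb0 : 0 < b := by omega
  have hbR : (0 : ℝ) < b := by exact_mod_cast hb0
  obtain ⟨h, g, G, z, Z, hg, hgG, hGb, hz0, hz1, hZ0, hZ1, hA⟩ := hrep
  obtain ⟨n, rfl⟩ := Nat.exists_eq_add_of_le hgG
  obtain ⟨ρ, rfl⟩ := Nat.exists_eq_add_of_le' hr
  have e1 : (b : ℝ) ^ (-((ρ + 1 : ℕ) : ℤ)) = 1 / (b : ℝ) ^ (ρ + 1) := by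
    rw [zpow_neg, zpow_natCast, one_div]
  have e2 : (b : ℝ) ^ (1 - ((ρ + 1 : ℕ) : ℤ)) = b / (b : ℝ) ^ (ρ + 1) := by
    rw [zpow_sub₀ hbR.ne', zpow_natCast, zpow_one]
  rw [e1] at hz1 hZ1 hA
  rw [e2] at hA
  set B : ℝ := (b : ℝ) ^ (ρ + 1) with hBdef
  have hB : 0 < B := by positivity
  set m : ℝ := (h * b + g) / B with hm
  set Y : ℝ := (B * Z + n) / B with hY
  have hBm : B * m = h * b + g := mul_div_cancel₀ _ hB.ne'
  have hBY : B * Y = B * Z + n := mul_div_cancel₀ _ hB.ne'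
  have hY0 : 0 ≤ Y := by positivity
  have hBz1 : B * z < 1 := by rwa [lt_div_iff₀' hB] at hz1
  have hBZ1 : B * Z < 1 := by rwa [lt_div_iff₀' hB] at hZ1
  have hA' : Set.Ico a c = Set.Ico (m - z) (m + Y) := by
    rw [hA, hm, hY]
    congr 1
    · ring
    · push_cast
      field_simp
      ring
  rw [hA'] at hsub ⊢
  clear hA hA' hne hmin
  have hgR : (1 : ℝ) ≤ g := by exact_mod_cast hg
  have hGR : (g : ℝ) + n + 1 ≤ b := by exact_mod_cast hGb
  have hn0 : (0 : ℝ) ≤ n := n.cast_nonneg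
  have hBρ : B = b * (b : ℝ) ^ ρ := by rw [hBdef, pow_succ, mul_comm]
  have hcell1 : ((h : ℤ) : ℝ) ≤ (b : ℝ) ^ ρ * (m - z) := by
    refine le_of_mul_le_mul_left ?_ hbR
    rw [← mul_assoc, ← hBρ, mul_sub, hBm]
    push_cast
    linarith
  have hcell2 : (b : ℝ) ^ ρ * (m + Y) ≤ ((h : ℤ) : ℝ) + 1 := by
    refine le_of_mul_le_mul_left ?_ hbR
    rw [← mul_assoc, ← hBρ, mul_add, hBm, hBY]
    push_cast
    linarith
  have hbρ : (0 : ℝ) < (b : ℝ) ^ ρ := by positivity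
  set M : ℕ → ℝ := fun i => volume.real (agreeSet ((b : ℝ) ^ i) (m - z) (m + Y)) with hMdef
  have hV : ∀ i, Vvec b (Set.Ico (m - z) (m + Y)) (Set.Ico (m - z) (m + Y)) i =
      M i - M (i + 1) := Vvec_Ico_eq_sub hb hsub
  have hMρ : M ρ = (z + Y) ^ 2 := by
    rw [hMdef]
    dsimp only
    rw [volume_agreeSet_of_cell hbρ hcell1 hcell2 (by linarith)]
    ring
  have hMi : ∀ i, M (ρ + 1 + i) =
      (cellArea ((b : ℝ) ^ (ρ + 1 + i) * z) + cellArea ((b : ℝ) ^ (ρ + 1 + i) * Y)) /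
        ((b : ℝ) ^ (ρ + 1 + i)) ^ 2 := fun i => by
    refine volume_agreeSet_of_grid (k := (b : ℤ) ^ i * (h * b + g)) (by positivity) ?_ hz0 hY0
    rw [pow_add, ← hBdef, mul_right_comm, hBm]
    push_cast
    ring
  have hVi : ∀ i, M (ρ + 1 + i) - M (ρ + 1 + i + 1) =
      (splitArea b ((b : ℝ) ^ (ρ + 1 + i) * z) + splitArea b ((b : ℝ) ^ (ρ + 1 + i) * Y)) /
        ((b : ℝ) ^ (ρ + 1 + i)) ^ 2 := fun i => by
    rw [add_assoc (ρ + 1) i 1, hMi i, hMi (i + 1), ← add_assoc (ρ + 1) i 1,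
      pow_succ' (b : ℝ) (ρ + 1 + i), mul_assoc, mul_assoc, splitArea, splitArea]
    field_simp
    ring
  refine ⟨fun i hi => ?_, fun i hi => ?_, ?_⟩
  · rw [Vvec]
    convert ENNReal.toReal_zero
    convert measure_empty (μ := volume)
    rw [Set.eq_empty_iff_forall_notMem]
    rintro P ⟨h1, h2, h3⟩
    rw [ne_and_gammaB_eq_iff hb (hsub h1) (hsub h2)] at h3
    refine h3.2 (floor_pow_mul_of_le hb0 (n := ρ) (by omega) ?_)
    rw [floor_mul_eq_of_mem_Ico hbρ hcell1 hcell2 h1, floor_mul_eq_of_mem_Ico hbρ hcell1 hcell2 h2]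
  · obtain ⟨i, rfl⟩ := Nat.exists_eq_add_of_le hi
    rw [hV, hV, hVi i, add_assoc (ρ + 1) i 1, hVi (i + 1), ← add_assoc (ρ + 1) i 1,
      pow_succ' (b : ℝ) (ρ + 1 + i), mul_assoc, mul_assoc]
    set C : ℝ := (b : ℝ) ^ (ρ + 1 + i)
    have hC : 0 < C := by positivity
    have h1 := mul_splitArea_le hb0 (mul_nonneg hC.le hz0)
    have h2 := mul_splitArea_le hb0 (mul_nonneg hC.le hY0)
    calc (splitArea b (C * z) + splitArea b (C * Y)) / C ^ 2 =
          (b * splitArea b (C * z) + b * splitArea b (C * Y)) / (b * C ^ 2) := by field_simp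
      _ ≤ (splitArea b (b * (C * z)) + splitArea b (b * (C * Y))) / (b * C ^ 2) := by gcongr
      _ = _ := by field_simp
  · have hnn : ∀ i, 0 ≤ M (ρ + 1 + i) - M (ρ + 1 + (i + 1)) := fun i => by
      rw [← add_assoc, ← hV]
      exact ENNReal.toReal_nonneg
    have hlim : Filter.Tendsto (fun i => M (ρ + 1 + i)) Filter.atTop (nhds 0) := by
      have hb1 : (b : ℝ)⁻¹ < 1 := inv_lt_one_of_one_lt₀ (by exact_mod_cast hb)
      have ht : Filter.Tendsto (fun i : ℕ => (z + Y) * ((b : ℝ)⁻¹) ^ (i + (ρ + 1)))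
          Filter.atTop (nhds 0) := by
        simpa using ((tendsto_pow_atTop_nhds_zero_of_lt_one (by positivity) hb1).comp
          (Filter.tendsto_add_atTop_nat (ρ + 1))).const_mul (z + Y)
      refine squeeze_zero (fun i => measureReal_nonneg) (fun i => ?_) ht
      rw [hMi, add_comm i, inv_pow]
      set C : ℝ := (b : ℝ) ^ (ρ + 1 + i)
      have hC : 0 < C := by positivity
      have h1 := cellArea_le (C * z)
      have h2 := cellArea_le (C * Y)
      calc (cellArea (C * z) + cellArea (C * Y)) / C ^ 2 ≤ (C * z + C * Y) / C ^ 2 := by gcongr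
        _ = (z + Y) * C⁻¹ := by field_simp
    have hsum := hasSum_sub_succ_of_antitone hnn hlim
    have htsum : ∑' i, Vvec b (Set.Ico (m - z) (m + Y)) (Set.Ico (m - z) (m + Y)) (ρ + 1 + i) =
        M (ρ + 1) := by
      simp only [hV]
      exact hsum.tsum_eq
    have h0 := hMi 0
    have h1 := hVi 0
    rw [add_zero, ← hBdef] at h0 h1
    rw [htsum, Nat.add_sub_cancel, hV, hV, hMρ, h1, h0, hBY]
    have key := sq_add_le_of_splitArea hb (mul_nonneg hB.le hz0) hBz1 (mul_nonneg hB.le hZ0) hBZ1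
      (n := n) (by omega)
    have hzY : (z + Y) ^ 2 = (B * z + (B * Z + n)) ^ 2 / B ^ 2 := by
      rw [← hBY]; field_simp
    have hdiv := div_le_div_of_nonneg_right key (sq_nonneg B)
    rw [hzY]
    rw [sub_div, mul_div_assoc (_ / _), mul_div_assoc 2] at hdiv
    linarith
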